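/- Let α,β>−1 and let N≥1 be an integer. For f in the linear span of {Φ_{2n+1}^{α,β}: n≥0} define (R̃_N^{α,β})⁺f = Σ_{n≥0} (λ_{n+1}^{α,β})^{−N/2}⟨f,Φ_{2n+1}^{α,β}⟩_{L²(μ⁺_{α,β})}·δ_N^odd Φ_{2n+1}^{α,β}. Then (R̃_N^{α,β})⁺ is bounded on L²(μ⁺_{α,β}): there is C such that ‖(R̃_N^{α,β})⁺f‖_{L²(μ⁺_{α,β})} ≤ C‖f‖_{L²(μ⁺_{α,β})} for all f in the span. -/

import Mathlib

open MeasureTheory Real Set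
open scoped ENNReal

noncomputable section

/-- The classical Jacobi polynomial `P_n^{α,β}`. -/
def jacobiP (α β : ℝ) (n : ℕ) (x : ℝ) : ℝ :=
  ∑ m ∈ Finset.range (n + 1),
    (Real.Gamma (α + n + 1) * Real.Gamma (α + β + n + m + 1)) /
      ((m.factorial : ℝ) * ((n - m).factorial : ℝ) * Real.Gamma (α + β + n + 1) *
        Real.Gamma (α + m + 1)) * ((x - 1) / 2) ^ m

/-- `Ψ^{α,β}(θ) = |sin(θ/2)|^{α+1/2} (cos(θ/2))^{β+1/2}`. -/
def jPsi (α β θ : ℝ) : ℝ := |Real.sin (θ / 2)| ^ (α + 1 / 2) * Real.cos (θ / 2) ^ (β + 1 / 2)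

/-- The measure `μ_{α,β}` on `(−π, π)`, with density `(Ψ^{α,β})²` w.r.t. Lebesgue measure. -/
def jacobiMeasure (α β : ℝ) : Measure ℝ :=
  (volume.restrict (Ioo (-π) π)).withDensity fun θ => ENNReal.ofReal (jPsi α β θ ^ 2)

/-- The restriction `μ⁺_{α,β}` of `μ_{α,β}` to `(0, π)`. -/
def jacobiMeasurePlus (α β : ℝ) : Measure ℝ := (jacobiMeasure α β).restrict (Ioo 0 π)

/-- The normalizing constant `c_n^{α,β}` making `𝒫_n^{α,β}` have unit `L²(μ⁺)` norm. -/
def cJ (α β : ℝ) (n : ℕ) : ℝ :=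
  (∫ θ, jacobiP α β n (Real.cos θ) ^ 2 ∂(jacobiMeasurePlus α β)) ^ (-(1 / 2) : ℝ)

/-- The normalized trigonometric Jacobi polynomial `𝒫_n^{α,β}(θ)`. -/
def trigP (α β : ℝ) (n : ℕ) (θ : ℝ) : ℝ := cJ α β n * jacobiP α β n (Real.cos θ)

/-- The eigenvalue `λ_n^{α,β} = (n + (α+β+1)/2)²`. -/
def jLam (α β : ℝ) (n : ℕ) : ℝ := ((n : ℝ) + (α + β + 1) / 2) ^ 2

/-- The symmetrized system `Φ_n^{α,β}`. -/
def symPhi (α β : ℝ) (n : ℕ) (θ : ℝ) : ℝ :=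
  if Even n then (Real.sqrt 2)⁻¹ * trigP α β (n / 2) θ
  else (Real.sqrt 2)⁻¹ * (Real.sin θ / 2) * trigP (α + 1) (β + 1) ((n - 1) / 2) θ

/-- The Jacobi functions `φ_n^{α,β} = Ψ^{α,β} 𝒫_n^{α,β}`. -/
def phiFun (α β : ℝ) (n : ℕ) (θ : ℝ) : ℝ := jPsi α β θ * trigP α β n θ

/-- The symmetrized Jacobi function system `Θ_n^{α,β}`. -/
def jTheta (α β : ℝ) (n : ℕ) (θ : ℝ) : ℝ :=
  if Even n then (Real.sqrt 2)⁻¹ * phiFun α β (n / 2) θ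
  else (Real.sqrt 2)⁻¹ * Real.sign θ * phiFun (α + 1) (β + 1) ((n - 1) / 2) θ

/-- The symmetrized Jacobi–Poisson semigroup `ℍ_t^{α,β}f(θ)` (polynomial setting). -/
def symH (α β : ℝ) (f : ℝ → ℝ) (t θ : ℝ) : ℝ :=
  ∑' n : ℕ, Real.exp (-t * Real.sqrt (jLam α β ((n + 1) / 2))) *
    (∫ φ, f φ * symPhi α β n φ ∂(jacobiMeasure α β)) * symPhi α β n θ

/-- The symmetrized Jacobi–Poisson semigroup `H̄_t^{α,β}f(θ)` (function setting). -/
def symHbar (α β : ℝ) (f : ℝ → ℝ) (t θ : ℝ) : ℝ :=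
  ∑' n : ℕ, Real.exp (-t * Real.sqrt (jLam α β ((n + 1) / 2))) *
    (∫ φ in Ioo (-π) π, f φ * jTheta α β n φ) * jTheta α β n θ

/-- The non-symmetrized Jacobi–Poisson semigroup `ℋ_t^{α,β}f(θ)` (polynomial setting). -/
def jacH (α β : ℝ) (f : ℝ → ℝ) (t θ : ℝ) : ℝ :=
  ∑' n : ℕ, Real.exp (-t * Real.sqrt (jLam α β n)) *
    (∫ φ, f φ * trigP α β n φ ∂(jacobiMeasurePlus α β)) * trigP α β n θ

/-- The non-symmetrized Jacobi–Poisson semigroup `𝓗̄_t^{α,β}f(θ)` (function setting). -/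
def jacHbar (α β : ℝ) (f : ℝ → ℝ) (t θ : ℝ) : ℝ :=
  ∑' n : ℕ, Real.exp (-t * Real.sqrt (jLam α β n)) *
    (∫ φ in Ioo 0 π, f φ * phiFun α β n φ) * phiFun α β n θ

/-- The symmetrized derivative `𝔻_{α,β}`. -/
def symD (α β : ℝ) (f : ℝ → ℝ) : ℝ → ℝ := fun θ =>
  deriv f θ + (α - β + (α + β + 1) * Real.cos θ) / Real.sin θ * ((f θ - f (-θ)) / 2)

/-- The symmetrized derivative `D̄_{α,β}` (function setting). -/
def symDbar (α β : ℝ) (f : ℝ → ℝ) : ℝ → ℝ := fun θ =>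
  deriv f θ -
    ((2 * α + 1) / 4 * (Real.cos (θ / 2) / Real.sin (θ / 2)) -
      (2 * β + 1) / 4 * Real.tan (θ / 2)) * f (-θ)

/-- The derivative `D_{α,β}` (non-symmetrized function setting). -/
def jacD (α β : ℝ) (f : ℝ → ℝ) : ℝ → ℝ := fun θ =>
  deriv f θ - (2 * α + 1) / 4 * (Real.cos (θ / 2) / Real.sin (θ / 2)) * f θ +
    (2 * β + 1) / 4 * Real.tan (θ / 2) * f θ

/-- `δ*_{α,β} = −d/dθ − (α+1/2)cot(θ/2) + (β+1/2)tan(θ/2)`. -/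
def delStar (α β : ℝ) (f : ℝ → ℝ) : ℝ → ℝ := fun θ =>
  -deriv f θ - (α + 1 / 2) * (Real.cos (θ / 2) / Real.sin (θ / 2)) * f θ +
    (β + 1 / 2) * Real.tan (θ / 2) * f θ

/-- `δ_N^even`: `N` alternating factors, rightmost (first applied) one being `δ = d/dθ`. -/
def deltaEven (α β : ℝ) : ℕ → (ℝ → ℝ) → ℝ → ℝ
  | 0 => fun f => f
  | N + 1 => fun f => (if N % 2 = 0 then deriv else delStar α β) (deltaEven α β N f)

/-- `δ_N^odd`: `N` alternating factors, rightmost (first applied) one being `δ*_{α,β}`. -/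
def deltaOdd (α β : ℝ) : ℕ → (ℝ → ℝ) → ℝ → ℝ
  | 0 => fun f => f
  | N + 1 => fun f => (if N % 2 = 0 then delStar α β else deriv) (deltaOdd α β N f)

/-- The Jacobi–Poisson kernel `H_t^{α,β}(θ,φ)` (even part of the symmetrized kernel). -/
def jHker (α β t θ φ : ℝ) : ℝ :=
  (1 / 2) * ∑' n : ℕ, Real.exp (-t * Real.sqrt (jLam α β n)) * trigP α β n θ * trigP α β n φ

/-- The kernel `H̃_t^{α,β}(θ,φ)` (odd part of the symmetrized kernel). -/
def jHtil (α β t θ φ : ℝ) : ℝ :=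
  (1 / 8) * Real.sin θ * Real.sin φ *
    ∑' n : ℕ, Real.exp (-t * Real.sqrt (jLam α β (n + 1))) *
      trigP (α + 1) (β + 1) n θ * trigP (α + 1) (β + 1) n φ

/-- `μ⁺_{α,β}(B(θ,r))` where `B(θ,r) = (θ−r, θ+r) ∩ (0,π)`. -/
def ballMeasure (α β θ r : ℝ) : ℝ≥0∞ := jacobiMeasurePlus α β (Ioo (θ - r) (θ + r))

/-- The Muckenhoupt class `A_p^{α,β}` (`1 < p < ∞`) on `(−π,π)` w.r.t. `μ_{α,β}`. -/
def IsApWeight (α β p : ℝ) (w : ℝ → ℝ) : Prop :=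
  (∀ θ, 0 ≤ w θ) ∧
    ∃ C : ℝ, ∀ a b : ℝ, -π ≤ a → a ≤ b → b ≤ π →
      (∫⁻ θ in Ioo a b, ENNReal.ofReal (w θ) ∂(jacobiMeasure α β)) *
          (∫⁻ θ in Ioo a b, ENNReal.ofReal (w θ ^ (-1 / (p - 1))) ∂(jacobiMeasure α β)) ^
            (p - 1) ≤
        ENNReal.ofReal C * jacobiMeasure α β (Ioo a b) ^ p

/-- The Muckenhoupt class `A_1^{α,β}` on `(−π,π)` w.r.t. `μ_{α,β}`. -/
def IsA1Weight (α β : ℝ) (w : ℝ → ℝ) : Prop :=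
  (∀ θ, 0 ≤ w θ) ∧
    ∃ C : ℝ, ∀ a b : ℝ, -π ≤ a → a ≤ b → b ≤ π →
      ∫⁻ θ in Ioo a b, ENNReal.ofReal (w θ) ∂(jacobiMeasure α β) ≤
        ENNReal.ofReal C *
          essInf (fun θ => ENNReal.ofReal (w θ)) ((jacobiMeasure α β).restrict (Ioo a b)) *
          jacobiMeasure α β (Ioo a b)

/-- The Muckenhoupt class `(A_p^{α,β})⁺` (`1 < p < ∞`) on `(0,π)` w.r.t. `μ⁺_{α,β}`. -/
def IsApWeightPlus (α β p : ℝ) (w : ℝ → ℝ) : Prop :=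
  (∀ θ, 0 ≤ w θ) ∧
    ∃ C : ℝ, ∀ a b : ℝ, 0 ≤ a → a ≤ b → b ≤ π →
      (∫⁻ θ in Ioo a b, ENNReal.ofReal (w θ) ∂(jacobiMeasurePlus α β)) *
          (∫⁻ θ in Ioo a b, ENNReal.ofReal (w θ ^ (-1 / (p - 1))) ∂(jacobiMeasurePlus α β)) ^
            (p - 1) ≤
        ENNReal.ofReal C * jacobiMeasurePlus α β (Ioo a b) ^ p

/-- The Muckenhoupt class `(A_1^{α,β})⁺` on `(0,π)` w.r.t. `μ⁺_{α,β}`. -/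
def IsA1WeightPlus (α β : ℝ) (w : ℝ → ℝ) : Prop :=
  (∀ θ, 0 ≤ w θ) ∧
    ∃ C : ℝ, ∀ a b : ℝ, 0 ≤ a → a ≤ b → b ≤ π →
      ∫⁻ θ in Ioo a b, ENNReal.ofReal (w θ) ∂(jacobiMeasurePlus α β) ≤
        ENNReal.ofReal C *
          essInf (fun θ => ENNReal.ofReal (w θ)) ((jacobiMeasurePlus α β).restrict (Ioo a b)) *
          jacobiMeasurePlus α β (Ioo a b)

/-- The double power weight `w_{r,s}(θ) = |sin(θ/2)|^r (cos(θ/2))^s`. -/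
def wrs (r s θ : ℝ) : ℝ := |Real.sin (θ / 2)| ^ r * Real.cos (θ / 2) ^ s


/-- The restricted Riesz–Jacobi transform `(R̃_N^{α,β})⁺` (on the span of the odd `Φ`'s). -/
def restRiesz (α β : ℝ) (N : ℕ) (f : ℝ → ℝ) (θ : ℝ) : ℝ :=
  ∑' n : ℕ, jLam α β (n + 1) ^ (-(N : ℝ) / 2) *
    (∫ φ, f φ * symPhi α β (2 * n + 1) φ ∂(jacobiMeasurePlus α β)) *
    deltaOdd α β N (symPhi α β (2 * n + 1)) θ


/-! ### Auxiliary material -/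

section Aux
open Polynomial

/-- Coefficients of the Jacobi polynomial in the variable `(x-1)/2`. -/
def jCoef (a b : ℝ) (n m : ℕ) : ℝ :=
  (Real.Gamma (a + n + 1) * Real.Gamma (a + b + n + m + 1)) /
      ((m.factorial : ℝ) * ((n - m).factorial : ℝ) * Real.Gamma (a + b + n + 1) *
        Real.Gamma (a + m + 1))

/-- The Jacobi polynomial in the variable `(x-1)/2`. -/
def jS (a b : ℝ) (n : ℕ) : ℝ[X] := ∑ m ∈ Finset.range (n + 1), C (jCoef a b n m) * X ^ m

lemma jacobiP_eq (a b : ℝ) (n : ℕ) (x : ℝ) :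
    jacobiP a b n x = (jS a b n).eval ((x - 1) / 2) := by
  simp [jacobiP, jS, jCoef, eval_finsetSum]

lemma jS_coeff (a b : ℝ) (n m : ℕ) :
    (jS a b n).coeff m = if m < n + 1 then jCoef a b n m else 0 := by
  simp [jS, coeff_C_mul, coeff_X_pow]

lemma jS_rec (a b : ℝ) (ha : 0 < a) (hb : 0 < b) (n m : ℕ) :
    ((m : ℝ) + 1) * (m + 1 + a) * (jS a b n).coeff (m + 1) =
      (n - m) * (n + m + a + b + 1) * (jS a b n).coeff m := by
  rw [jS_coeff, jS_coeff]
  rcases lt_trichotomy m n with h | h | h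
  · rw [if_pos (by omega), if_pos (by omega)]
    obtain ⟨k, rfl⟩ : ∃ k, n = m + k + 1 := ⟨n - m - 1, by omega⟩
    unfold jCoef
    have e1 : m + k + 1 - (m + 1) = k := by omega
    have e2 : m + k + 1 - m = k + 1 := by omega
    rw [e1, e2, Nat.factorial_succ, Nat.factorial_succ]
    push_cast
    have h1 : Real.Gamma (a + (m + 1) + 1) = (a + m + 1) * Real.Gamma (a + m + 1) := by
      rw [← Real.Gamma_add_one (by positivity)]; congr 1; ring
    have h2 : Real.Gamma (a + b + (m + k + 1) + (m + 1) + 1) =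
        (a + b + (m + k + 1) + m + 1) * Real.Gamma (a + b + (m + k + 1) + m + 1) := by
      rw [← Real.Gamma_add_one (by positivity)]; congr 1; ring
    rw [h1, h2]
    have p1 : Real.Gamma (a + m + 1) ≠ 0 := (Real.Gamma_pos_of_pos (by positivity)).ne'
    have p2 : Real.Gamma (a + b + (m + k + 1) + 1) ≠ 0 :=
      (Real.Gamma_pos_of_pos (by positivity)).ne'
    have p3 : (a + m + 1) ≠ 0 := by positivity
    have p4 : (m.factorial : ℝ) ≠ 0 := by positivity
    have p5 : (k.factorial : ℝ) ≠ 0 := by positivity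
    have p6 : ((m : ℝ) + 1) ≠ 0 := by positivity
    have p7 : ((k : ℝ) + 1) ≠ 0 := by positivity
    field_simp
    ring
  · subst h; simp
  · rw [if_neg (by omega), if_neg (by omega)]; simp

/-- The polynomial appearing in `δ* Φ_{2n+1}`. -/
def jR (a b : ℝ) (n : ℕ) : ℝ[X] :=
  X * derivative (jS a b n) + X * (X * derivative (jS a b n)) + C a * jS a b n +
    C (a + b) * (X * jS a b n)

/-- The eigenvalue `(n+1)(n+a+b)`. -/
def jK (a b : ℝ) (n : ℕ) : ℝ := ((n : ℝ) + 1) * (n + a + b)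

lemma jR_deriv (a b : ℝ) (ha : 0 < a) (hb : 0 < b) (n : ℕ) :
    derivative (jR a b n) = C (jK a b n) * jS a b n := by
  ext m
  have h := jS_rec a b ha hb n m
  have hX : (X * derivative (jS a b n)).coeff m = m * (jS a b n).coeff m := by
    cases m with
    | zero => simp
    | succ k => rw [coeff_X_mul, coeff_derivative]; push_cast; ring
  rw [coeff_derivative, coeff_C_mul]
  simp only [jR, coeff_add, coeff_C_mul, coeff_X_mul, hX, coeff_derivative, jK]
  linear_combination h

/-- `u(θ) = (cos θ - 1)/2`. -/
def jU (θ : ℝ) : ℝ := (Real.cos θ - 1) / 2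

/-- The constant in `Φ_{2n+1}`. -/
def jC (α β : ℝ) (n : ℕ) : ℝ := (Real.sqrt 2)⁻¹ / 2 * cJ (α + 1) (β + 1) n

def jQ (α β : ℝ) (n : ℕ) (θ : ℝ) : ℝ :=
  jC α β n * Real.sin θ * (jS (α + 1) (β + 1) n).eval (jU θ)

def jD (α β : ℝ) (n : ℕ) (θ : ℝ) : ℝ :=
  -2 * jC α β n * (jR (α + 1) (β + 1) n).eval (jU θ)

lemma symPhi_odd (α β : ℝ) (n : ℕ) : symPhi α β (2 * n + 1) = jQ α β n := by
  funext θ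
  have h : ¬ Even (2 * n + 1) := by simp
  have h2 : (2 * n + 1 - 1) / 2 = n := by omega
  simp only [symPhi, h, if_false, h2, trigP, jacobiP_eq, jQ, jC, jU]
  ring

lemma hasDerivAt_U (θ : ℝ) : HasDerivAt jU (-Real.sin θ / 2) θ := by
  unfold jU
  simpa using ((Real.hasDerivAt_cos θ).sub_const 1).div_const 2

lemma hasDerivAt_evalU (p : ℝ[X]) (θ : ℝ) :
    HasDerivAt (fun θ => p.eval (jU θ)) ((derivative p).eval (jU θ) * (-Real.sin θ / 2)) θ :=
  (p.hasDerivAt (jU θ)).comp θ (hasDerivAt_U θ)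

lemma hasDerivAt_Q (α β : ℝ) (n : ℕ) (θ : ℝ) :
    HasDerivAt (jQ α β n) (jC α β n * Real.cos θ * (jS (α + 1) (β + 1) n).eval (jU θ) +
      jC α β n * Real.sin θ *
        ((derivative (jS (α + 1) (β + 1) n)).eval (jU θ) * (-Real.sin θ / 2))) θ :=
  ((Real.hasDerivAt_sin θ).const_mul (jC α β n)).mul (hasDerivAt_evalU _ θ)

lemma hasDerivAt_D (α β : ℝ) (hα : -1 < α) (hβ : -1 < β) (n : ℕ) (θ : ℝ) :
    HasDerivAt (jD α β n) (jK (α + 1) (β + 1) n * jQ α β n θ) θ := by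
  have h := (hasDerivAt_evalU (jR (α + 1) (β + 1) n) θ).const_mul (-2 * jC α β n)
  rw [jR_deriv _ _ (by linarith) (by linarith)] at h
  refine h.congr_deriv ?_
  simp [jQ]; ring

lemma jhalf_pos {θ : ℝ} (h : θ ∈ Ioo 0 π) : 0 < Real.sin (θ / 2) ∧ 0 < Real.cos (θ / 2) :=
  ⟨Real.sin_pos_of_pos_of_lt_pi (by linarith [h.1]) (by linarith [h.1, h.2]),
    Real.cos_pos_of_mem_Ioo ⟨by linarith [h.1, Real.pi_pos], by linarith [h.2]⟩⟩

lemma trig_half (θ : ℝ) : Real.sin θ = 2 * Real.sin (θ / 2) * Real.cos (θ / 2) ∧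
    Real.cos θ = 2 * Real.cos (θ / 2) ^ 2 - 1 ∧
    Real.sin (θ / 2) ^ 2 + Real.cos (θ / 2) ^ 2 = 1 := by
  refine ⟨?_, ?_, Real.sin_sq_add_cos_sq _⟩
  · rw [← Real.sin_two_mul]; congr 1; ring
  · rw [← Real.cos_two_mul]; congr 1; ring

lemma delStar_Q (α β : ℝ) (n : ℕ) {θ : ℝ} (h : θ ∈ Ioo 0 π) :
    delStar α β (jQ α β n) θ = jD α β n θ := by
  obtain ⟨hs, hc⟩ := jhalf_pos h
  obtain ⟨e1, e2, e3⟩ := trig_half θ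
  rw [delStar, (hasDerivAt_Q α β n θ).deriv, Real.tan_eq_sin_div_cos]
  simp only [jQ, jD, jR, eval_add, eval_mul, eval_X, eval_C]
  have hu : jU θ = - Real.sin (θ / 2) ^ 2 := by rw [jU, e2]; linarith
  generalize (eval (jU θ) (jS (α + 1) (β + 1) n)) = A
  generalize (eval (jU θ) (derivative (jS (α + 1) (β + 1) n))) = B
  rw [hu, e1, e2]
  generalize jC α β n = K
  generalize Real.sin (θ / 2) = s at *
  generalize Real.cos (θ / 2) = c at *
  have hc2 : c ^ 2 = 1 - s ^ 2 := by linarith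
  field_simp
  rw [hc2]
  ring

lemma deltaOdd_Q (α β : ℝ) (hα : -1 < α) (hβ : -1 < β) (n N : ℕ) :
    EqOn (deltaOdd α β N (jQ α β n))
      (fun θ => jK (α + 1) (β + 1) n ^ (N / 2) * (if N % 2 = 0 then jQ α β n θ else jD α β n θ))
      (Ioo 0 π) := by
  induction N with
  | zero => intro θ _; simp [deltaOdd]
  | succ N ih =>
    intro θ hθ
    have hev := ih.eventuallyEq_of_mem (Ioo_mem_nhds hθ.1 hθ.2)
    rcases Nat.mod_two_eq_zero_or_one N with h | h
    · have h1 : (N + 1) % 2 ≠ 0 := by omega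
      have h2 : (N + 1) / 2 = N / 2 := by omega
      simp only [h, if_true] at hev
      simp only [deltaOdd, h, h1, h2, if_true, if_false]
      rw [← delStar_Q α β n hθ]
      unfold delStar
      rw [hev.deriv_eq, hev.eq_of_nhds, deriv_const_mul _ (hasDerivAt_Q α β n θ).differentiableAt]
      ring
    · have h0 : N % 2 ≠ 0 := by omega
      have h1 : (N + 1) % 2 = 0 := by omega
      have h2 : (N + 1) / 2 = N / 2 + 1 := by omega
      simp only [h0, if_false] at hev
      simp only [deltaOdd, h0, h1, h2, if_true, if_false]
      rw [hev.deriv_eq, deriv_const_mul _ (hasDerivAt_D α β hα hβ n θ).differentiableAt,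
        (hasDerivAt_D α β hα hβ n θ).deriv]
      ring

end Aux

section AuxMeasure
open Polynomial

lemma jPsi_sq (α β : ℝ) {θ : ℝ} (h : θ ∈ Ioo 0 π) :
    jPsi α β θ ^ 2 = Real.sin (θ / 2) ^ (2 * α + 1) * Real.cos (θ / 2) ^ (2 * β + 1) := by
  obtain ⟨hs, hc⟩ := jhalf_pos h
  rw [jPsi, abs_of_pos hs, mul_pow, ← Real.rpow_mul_natCast hs.le, ← Real.rpow_mul_natCast hc.le]
  congr 2 <;> push_cast <;> ring

lemma measurable_jPsi (α β : ℝ) : Measurable (fun θ => jPsi α β θ ^ 2) := by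
  unfold jPsi
  fun_prop

lemma rpow_bound {y r : ℝ} (h1 : 1 / 2 ≤ y) (h2 : y ≤ 1) : y ^ r ≤ 2 ^ |r| := by
  have hy : 0 < y := by linarith
  calc y ^ r ≤ y ^ (-|r|) := Real.rpow_le_rpow_of_exponent_ge hy h2 (neg_abs_le r)
    _ = (y⁻¹) ^ |r| := by rw [Real.rpow_neg hy.le, Real.inv_rpow hy.le]
    _ ≤ 2 ^ |r| := by
      apply Real.rpow_le_rpow (by positivity) _ (abs_nonneg r)
      rw [inv_le_comm₀ hy (by norm_num)]; linarith

lemma hasDerivAt_sinHalf (θ : ℝ) :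
    HasDerivAt (fun θ => Real.sin (θ / 2)) (Real.cos (θ / 2) * (1 / 2)) θ :=
  ((hasDerivAt_id' θ).div_const 2).sin

lemma hasDerivAt_cosHalf (θ : ℝ) :
    HasDerivAt (fun θ => Real.cos (θ / 2)) (-Real.sin (θ / 2) * (1 / 2)) θ :=
  ((hasDerivAt_id' θ).div_const 2).cos

lemma integrable_sin (α : ℝ) (hα : -1 < α) :
    IntegrableOn (fun θ => Real.cos (θ / 2) * (1 / 2) * (2 * α + 2) *
      Real.sin (θ / 2) ^ (2 * α + 2 - 1)) (Ioo 0 π) := by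
  refine (intervalIntegral.integrableOn_deriv_of_nonneg
    (g := fun θ => Real.sin (θ / 2) ^ (2 * α + 2)) ?_ ?_ ?_).mono_set Ioo_subset_Ioc_self
  · refine Continuous.continuousOn ?_
    exact (by fun_prop : Continuous fun θ : ℝ => Real.sin (θ / 2)).rpow_const
      (fun x => Or.inr (by linarith))
  · intro θ hθ
    exact (hasDerivAt_sinHalf θ).rpow_const (Or.inl (jhalf_pos hθ).1.ne')
  · intro θ hθ
    obtain ⟨hs, hc⟩ := jhalf_pos hθ
    have : 0 < 2 * α + 2 := by linarith
    positivity

lemma integrable_cos (β : ℝ) (hβ : -1 < β) :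
    IntegrableOn (fun θ => -(-Real.sin (θ / 2) * (1 / 2) * (2 * β + 2) *
      Real.cos (θ / 2) ^ (2 * β + 2 - 1))) (Ioo 0 π) := by
  refine (intervalIntegral.integrableOn_deriv_of_nonneg
    (g := fun θ => -Real.cos (θ / 2) ^ (2 * β + 2)) ?_ ?_ ?_).mono_set Ioo_subset_Ioc_self
  · refine Continuous.continuousOn ?_
    exact ((by fun_prop : Continuous fun θ : ℝ => Real.cos (θ / 2)).rpow_const
      (fun x => Or.inr (by linarith))).neg
  · intro θ hθ
    exact ((hasDerivAt_cosHalf θ).rpow_const (Or.inl (jhalf_pos hθ).2.ne')).neg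
  · intro θ hθ
    obtain ⟨hs, hc⟩ := jhalf_pos hθ
    have : 0 < 2 * β + 2 := by linarith
    have : 0 < Real.sin (θ / 2) * (1 / 2) * (2 * β + 2) * Real.cos (θ / 2) ^ (2 * β + 2 - 1) := by
      positivity
    linarith

lemma integrable_w (α β : ℝ) (hα : -1 < α) (hβ : -1 < β) :
    IntegrableOn (fun θ => jPsi α β θ ^ 2) (Ioo 0 π) := by
  have i1 := ((integrable_sin α hα).const_mul (2 ^ |2 * β| / (α + 1))).add
    ((integrable_cos β hβ).const_mul (2 ^ |2 * α| / (β + 1)))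
  refine Integrable.mono' i1 (measurable_jPsi α β).aestronglyMeasurable ?_
  filter_upwards [ae_restrict_mem measurableSet_Ioo] with θ hθ
  obtain ⟨hs, hc⟩ := jhalf_pos hθ
  obtain ⟨-, -, e3⟩ := trig_half θ
  have ha : 0 < α + 1 := by linarith
  have hb : 0 < β + 1 := by linarith
  rw [Real.norm_of_nonneg (sq_nonneg _), jPsi_sq α β hθ, Pi.add_apply]
  have ea : 2 * α + 2 - 1 = 2 * α + 1 := by ring
  have eb : 2 * β + 2 - 1 = 2 * β + 1 := by ring
  simp only [ea, eb]
  generalize Real.sin (θ / 2) = s at *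
  generalize Real.cos (θ / 2) = c at *
  have k1 : 2 ^ |2 * β| / (α + 1) * (c * (1 / 2) * (2 * α + 2) * s ^ (2 * α + 1)) =
      2 ^ |2 * β| * (c * s ^ (2 * α + 1)) := by field_simp
  have k2 : 2 ^ |2 * α| / (β + 1) * -(-s * (1 / 2) * (2 * β + 2) * c ^ (2 * β + 1)) =
      2 ^ |2 * α| * (s * c ^ (2 * β + 1)) := by field_simp
  rw [k1, k2]
  have hs1 : s ≤ 1 := by nlinarith
  have hc1 : c ≤ 1 := by nlinarith
  have n1 : 0 ≤ 2 ^ |2 * β| * (c * s ^ (2 * α + 1)) := by positivity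
  have n2 : 0 ≤ 2 ^ |2 * α| * (s * c ^ (2 * β + 1)) := by positivity
  by_cases h : 1 / 2 ≤ c
  · have := rpow_bound (r := 2 * β) h hc1
    have e : s ^ (2 * α + 1) * c ^ (2 * β + 1) = c ^ (2 * β) * (c * s ^ (2 * α + 1)) := by
      rw [Real.rpow_add_one hc.ne']; ring
    have : c ^ (2 * β) * (c * s ^ (2 * α + 1)) ≤ 2 ^ |2 * β| * (c * s ^ (2 * α + 1)) := by gcongr
    linarith
  · have h' : 1 / 2 ≤ s := by nlinarith
    have := rpow_bound (r := 2 * α) h' hs1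
    have e : s ^ (2 * α + 1) * c ^ (2 * β + 1) = s ^ (2 * α) * (s * c ^ (2 * β + 1)) := by
      rw [Real.rpow_add_one hs.ne']; ring
    have : s ^ (2 * α) * (s * c ^ (2 * β + 1)) ≤ 2 ^ |2 * α| * (s * c ^ (2 * β + 1)) := by gcongr
    linarith

lemma measPlus_eq (α β : ℝ) : jacobiMeasurePlus α β =
    (volume.restrict (Ioo 0 π)).withDensity fun θ => ENNReal.ofReal (jPsi α β θ ^ 2) := by
  rw [jacobiMeasurePlus, jacobiMeasure, restrict_withDensity measurableSet_Ioo,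
    Measure.restrict_restrict measurableSet_Ioo]
  congr 2
  ext x
  simp only [mem_inter_iff, mem_Ioo]
  have := Real.pi_pos
  constructor
  · exact fun h => h.1
  · exact fun h => ⟨h, by linarith [h.1], h.2⟩

lemma integral_plus (α β : ℝ) (g : ℝ → ℝ) :
    ∫ θ, g θ ∂(jacobiMeasurePlus α β) = ∫ θ in Ioo 0 π, jPsi α β θ ^ 2 * g θ := by
  rw [measPlus_eq, integral_withDensity_eq_integral_toReal_smul
    (measurable_jPsi α β).ennreal_ofReal (by simp)]
  simp [ENNReal.toReal_ofReal, sq_nonneg]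

lemma finite_plus (α β : ℝ) (hα : -1 < α) (hβ : -1 < β) :
    IsFiniteMeasure (jacobiMeasurePlus α β) := by
  rw [measPlus_eq]
  exact isFiniteMeasure_withDensity_ofReal (integrable_w α β hα hβ).2

lemma ae_plus (α β : ℝ) : ∀ᵐ θ ∂(jacobiMeasurePlus α β), θ ∈ Ioo 0 π :=
  ae_restrict_mem measurableSet_Ioo

lemma integrable_plus (α β : ℝ) (hα : -1 < α) (hβ : -1 < β) {g : ℝ → ℝ} (hg : Continuous g) :
    Integrable g (jacobiMeasurePlus α β) := by
  have := finite_plus α β hα hβ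
  obtain ⟨M, hM⟩ := (isCompact_Icc (a := 0) (b := π)).exists_bound_of_continuousOn hg.continuousOn
  refine Integrable.of_bound hg.aestronglyMeasurable M ?_
  filter_upwards [ae_plus α β] with θ hθ
  exact hM θ (Ioo_subset_Icc_self hθ)

lemma continuous_evalU (p : ℝ[X]) : Continuous fun θ => p.eval (jU θ) :=
  continuous_iff_continuousAt.2 fun θ => (hasDerivAt_evalU p θ).continuousAt

lemma continuous_Q (α β : ℝ) (n : ℕ) : Continuous (jQ α β n) :=
  continuous_iff_continuousAt.2 fun θ => (hasDerivAt_Q α β n θ).continuousAt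

lemma continuous_D (α β : ℝ) (n : ℕ) : Continuous (jD α β n) :=
  continuous_const.mul (continuous_evalU _)

/-- Integration by parts. -/
lemma ibp (α β : ℝ) (hα : -1 < α) (hβ : -1 < β) (n m : ℕ) :
    ∫ θ, jD α β n θ * jD α β m θ ∂(jacobiMeasurePlus α β) =
      jK (α + 1) (β + 1) m * ∫ θ, jQ α β n θ * jQ α β m θ ∂(jacobiMeasurePlus α β) := by
  have ha : 0 < 2 * α + 2 := by linarith
  have hb : 0 < 2 * β + 2 := by linarith
  have hcQ := continuous_Q α β
  have hcD := continuous_D α β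
  have key : ∫ θ, (jK (α + 1) (β + 1) m * (jQ α β n θ * jQ α β m θ) - jD α β n θ * jD α β m θ)
      ∂(jacobiMeasurePlus α β) = 0 := by
    have hint : Integrable (fun θ => jPsi α β θ ^ 2 *
        (jK (α + 1) (β + 1) m * (jQ α β n θ * jQ α β m θ) - jD α β n θ * jD α β m θ))
        (volume.restrict (Ioo 0 π)) := by
      have := integrable_plus α β hα hβ (g := fun θ =>
        (jK (α + 1) (β + 1) m * (jQ α β n θ * jQ α β m θ) - jD α β n θ * jD α β m θ))
        (by fun_prop)
      rw [measPlus_eq, integrable_withDensity_iff_integrable_smul₀'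
        (measurable_jPsi α β).ennreal_ofReal.aemeasurable (by simp)] at this
      simpa [ENNReal.toReal_ofReal, sq_nonneg] using this
    rw [integral_plus, ← integral_Ioc_eq_integral_Ioo,
      ← intervalIntegral.integral_of_le Real.pi_pos.le]
    rw [intervalIntegral.integral_eq_sub_of_hasDerivAt_of_le (f := fun θ =>
      (Real.sin (θ / 2) ^ (2 * α + 2) * Real.cos (θ / 2) ^ (2 * β + 2)) *
        (2 * jC α β n * (jS (α + 1) (β + 1) n).eval (jU θ) * jD α β m θ)) Real.pi_pos.le]
    · simp [Real.zero_rpow ha.ne', Real.zero_rpow hb.ne']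
    · refine Continuous.continuousOn ?_
      refine Continuous.mul (Continuous.mul ?_ ?_) ?_
      · exact (by fun_prop : Continuous fun θ : ℝ => Real.sin (θ / 2)).rpow_const
          (fun x => Or.inr ha.le)
      · exact (by fun_prop : Continuous fun θ : ℝ => Real.cos (θ / 2)).rpow_const
          (fun x => Or.inr hb.le)
      · exact (continuous_const.mul (continuous_evalU _)).mul (hcD m)
    · intro θ hθ
      obtain ⟨hs, hc⟩ := jhalf_pos hθ
      obtain ⟨e1, e2, e3⟩ := trig_half θ
      have d := (((hasDerivAt_sinHalf θ).rpow_const (p := 2 * α + 2) (Or.inl hs.ne')).mul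
        ((hasDerivAt_cosHalf θ).rpow_const (p := 2 * β + 2) (Or.inl hc.ne'))).mul
        (((hasDerivAt_evalU (jS (α + 1) (β + 1) n) θ).const_mul (2 * jC α β n)).mul
          (hasDerivAt_D α β hα hβ m θ))
      refine d.congr_deriv ?_
      have hu : jU θ = - Real.sin (θ / 2) ^ 2 := by rw [jU, e2]; linarith
      rw [jPsi_sq α β hθ]
      have ea : 2 * α + 2 - 1 = 2 * α + 1 := by ring
      have eb : 2 * β + 2 - 1 = 2 * β + 1 := by ring
      have ra : Real.sin (θ / 2) ^ (2 * α + 2) =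
          Real.sin (θ / 2) ^ (2 * α + 1) * Real.sin (θ / 2) := by
        rw [← Real.rpow_add_one hs.ne']; congr 1; ring
      have rb : Real.cos (θ / 2) ^ (2 * β + 2) =
          Real.cos (θ / 2) ^ (2 * β + 1) * Real.cos (θ / 2) := by
        rw [← Real.rpow_add_one hc.ne']; congr 1; ring
      simp only [Pi.mul_apply, ea, eb, ra, rb]
      generalize hDm : jD α β m θ = Dm
      generalize hQm : jQ α β m θ = Qm
      simp only [jQ, jD, jR, eval_add, eval_mul, eval_X, eval_C]
      generalize (eval (jU θ) (jS (α + 1) (β + 1) n)) = A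
      generalize (eval (jU θ) (derivative (jS (α + 1) (β + 1) n))) = B
      rw [hu, e1]
      generalize jC α β n = K
      generalize Real.sin (θ / 2) ^ (2 * α + 1) = sa
      generalize Real.cos (θ / 2) ^ (2 * β + 1) = cb
      generalize Real.sin (θ / 2) = s at *
      generalize Real.cos (θ / 2) = c at *
      have hc2 : c ^ 2 = 1 - s ^ 2 := by linarith
      ring_nf
      simp only [hc2]
      ring
    · rw [intervalIntegrable_iff_integrableOn_Ioo_of_le Real.pi_pos.le]
      exact hint
  rw [integral_sub ((integrable_plus α β hα hβ (by fun_prop)))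
    ((integrable_plus α β hα hβ (by fun_prop))), integral_const_mul] at key
  linarith

lemma jK_pos (α β : ℝ) (hα : -1 < α) (hβ : -1 < β) (n : ℕ) : 0 < jK (α + 1) (β + 1) n := by
  have : (0 : ℝ) ≤ n := n.cast_nonneg
  unfold jK
  apply mul_pos <;> linarith

lemma jK_inj (α β : ℝ) (hα : -1 < α) (hβ : -1 < β) {n m : ℕ}
    (h : jK (α + 1) (β + 1) n = jK (α + 1) (β + 1) m) : n = m := by
  have h1 : (0 : ℝ) ≤ n := n.cast_nonneg
  have h2 : (0 : ℝ) ≤ m := m.cast_nonneg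
  have : ((n : ℝ) - m) * (n + m + 1 + (α + 1) + (β + 1)) = 0 := by
    unfold jK at h; linear_combination h
  rcases mul_eq_zero.1 this with h | h
  · exact_mod_cast sub_eq_zero.1 h
  · linarith

lemma jK_le (α β : ℝ) (n : ℕ) : jK (α + 1) (β + 1) n ≤ jLam α β (n + 1) := by
  unfold jK jLam
  push_cast
  nlinarith [sq_nonneg (α + β + 1)]

lemma orth_Q (α β : ℝ) (hα : -1 < α) (hβ : -1 < β) {n m : ℕ} (h : n ≠ m) :
    ∫ θ, jQ α β n θ * jQ α β m θ ∂(jacobiMeasurePlus α β) = 0 := by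
  have h1 := ibp α β hα hβ n m
  have h2 := ibp α β hα hβ m n
  simp only [mul_comm (jD α β m _), mul_comm (jQ α β m _)] at h2
  rw [h1] at h2
  by_contra h0
  exact h (jK_inj α β hα hβ (mul_right_cancel₀ h0 h2)).symm

lemma norm_Q (α β : ℝ) (n : ℕ) :
    ∫ θ, jQ α β n θ * jQ α β n θ ∂(jacobiMeasurePlus α β) ≤ 1 := by
  have e : ∫ θ, jQ α β n θ * jQ α β n θ ∂(jacobiMeasurePlus α β) =
      1 / 2 * (cJ (α + 1) (β + 1) n ^ 2 *
        ∫ θ, jacobiP (α + 1) (β + 1) n (Real.cos θ) ^ 2 ∂(jacobiMeasurePlus (α + 1) (β + 1))) := by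
    rw [integral_plus, integral_plus, ← integral_const_mul, ← integral_const_mul]
    refine setIntegral_congr_fun measurableSet_Ioo fun θ hθ => ?_
    obtain ⟨hs, hc⟩ := jhalf_pos hθ
    obtain ⟨e1, -, -⟩ := trig_half θ
    have ea : 2 * (α + 1) + 1 = 2 * α + 1 + (2 : ℕ) := by push_cast; ring
    have eb : 2 * (β + 1) + 1 = 2 * β + 1 + (2 : ℕ) := by push_cast; ring
    rw [jPsi_sq _ _ hθ, jPsi_sq _ _ hθ, ea, eb, Real.rpow_add_natCast hs.ne',
      Real.rpow_add_natCast hc.ne', jacobiP_eq, jQ, jC, e1, jU]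
    have h2 : (Real.sqrt 2)⁻¹ ^ 2 = 1 / 2 := by rw [inv_pow, Real.sq_sqrt (by norm_num)]; norm_num
    ring_nf
    rw [h2]
    ring
  rw [e]
  unfold cJ
  set I := ∫ θ, jacobiP (α + 1) (β + 1) n (Real.cos θ) ^ 2 ∂(jacobiMeasurePlus (α + 1) (β + 1))
    with hI
  have hI0 : 0 ≤ I := integral_nonneg fun θ => sq_nonneg _
  rcases hI0.eq_or_lt with h | h
  · rw [← h]; norm_num
  · rw [← Real.rpow_mul_natCast hI0]
    have : (-(1 / 2) : ℝ) * ((2 : ℕ) : ℝ) = -1 := by norm_num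
    rw [this, Real.rpow_neg_one, inv_mul_cancel₀ h.ne']
    norm_num

lemma sum_sq (μ : Measure ℝ) (g : ℕ → ℝ → ℝ) (d : ℕ → ℝ) (s : Finset ℕ) (b : ℕ → ℝ)
    (hi : ∀ n m, Integrable (fun θ => g n θ * g m θ) μ)
    (ho : ∀ n m, ∫ θ, g n θ * g m θ ∂μ = if n = m then d n else 0) :
    ∫⁻ θ, ENNReal.ofReal ((∑ n ∈ s, b n * g n θ) ^ 2) ∂μ =
      ENNReal.ofReal (∑ n ∈ s, b n ^ 2 * d n) := by
  have e : (fun θ => (∑ n ∈ s, b n * g n θ) ^ 2) =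
      fun θ => ∑ n ∈ s, ∑ m ∈ s, b n * b m * (g n θ * g m θ) := by
    funext θ
    rw [sq, Finset.sum_mul_sum]
    refine Finset.sum_congr rfl fun n _ => Finset.sum_congr rfl fun m _ => by ring
  have hint : Integrable (fun θ => (∑ n ∈ s, b n * g n θ) ^ 2) μ := by
    rw [e]
    exact integrable_finsetSum _ fun n _ => integrable_finsetSum _ fun m _ =>
      (hi n m).const_mul _
  rw [← ofReal_integral_eq_lintegral_ofReal hint (Filter.Eventually.of_forall fun θ => sq_nonneg _),
    e, integral_finsetSum _ fun n _ => integrable_finsetSum _ fun m _ => (hi n m).const_mul _]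
  congr 1
  refine Finset.sum_congr rfl fun n hn => ?_
  rw [integral_finsetSum _ fun m _ => (hi n m).const_mul _]
  simp only [integral_const_mul, ho]
  simp [hn, sq]

end AuxMeasure

/-- Theorem (L²(μ⁺) boundedness of `(R̃_N^{α,β})⁺` on the span of the odd `Φ`'s). -/
theorem restRiesz_L2_bounded (α β : ℝ) (hα : -1 < α) (hβ : -1 < β) (N : ℕ) (hN : 1 ≤ N) :
    ∃ C : ℝ, 0 < C ∧ ∀ f : ℝ → ℝ,
      f ∈ Submodule.span ℝ (Set.range fun n : ℕ => symPhi α β (2 * n + 1)) →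
      (∫⁻ θ, ENNReal.ofReal (restRiesz α β N f θ ^ 2) ∂(jacobiMeasurePlus α β)) ^ (1 / 2 : ℝ) ≤
        ENNReal.ofReal C *
          (∫⁻ θ, ENNReal.ofReal (f θ ^ 2) ∂(jacobiMeasurePlus α β)) ^ (1 / 2 : ℝ) := by
  refine ⟨1, one_pos, fun f hf => ?_⟩
  rw [ENNReal.ofReal_one, one_mul]
  refine ENNReal.rpow_le_rpow ?_ (by norm_num)
  simp only [symPhi_odd] at hf
  obtain ⟨a, ha⟩ := Finsupp.mem_span_range_iff_exists_finsupp.1 hf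
  have hcQ := continuous_Q α β
  have hcD := continuous_D α β
  set μ := jacobiMeasurePlus α β with hμ
  set q : ℕ → ℝ := fun n => ∫ θ, jQ α β n θ * jQ α β n θ ∂μ with hq
  set κ : ℕ → ℝ := jK (α + 1) (β + 1) with hκ
  have hκ0 : ∀ n, 0 < κ n := jK_pos α β hα hβ
  have hq0 : ∀ n, 0 ≤ q n := fun n => integral_nonneg fun θ => mul_self_nonneg _
  have hq1 : ∀ n, q n ≤ 1 := norm_Q α β
  have hiQ : ∀ n m, Integrable (fun θ => jQ α β n θ * jQ α β m θ) μ :=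
    fun n m => integrable_plus α β hα hβ (by fun_prop)
  have hiD : ∀ n m, Integrable (fun θ => jD α β n θ * jD α β m θ) μ :=
    fun n m => integrable_plus α β hα hβ (by fun_prop)
  have hoQ : ∀ n m, ∫ θ, jQ α β n θ * jQ α β m θ ∂μ = if n = m then q n else 0 := by
    intro n m
    split_ifs with h
    · subst h; rfl
    · exact orth_Q α β hα hβ h
  have hoD : ∀ n m, ∫ θ, jD α β n θ * jD α β m θ ∂μ = if n = m then κ n * q n else 0 := by
    intro n m
    rw [ibp α β hα hβ, hoQ]
    split_ifs with h
    · rw [h]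
    · simp
  have hfe : f = fun θ => ∑ n ∈ a.support, a n * jQ α β n θ := by
    rw [← ha]; funext θ; simp [Finsupp.sum]
  have hcoef : ∀ n, ∫ φ, f φ * jQ α β n φ ∂μ = a n * q n := by
    intro n
    rw [hfe]
    simp only [Finset.sum_mul, mul_assoc]
    rw [integral_finsetSum _ fun m _ => (hiQ m n).const_mul _]
    simp only [integral_const_mul, hoQ]
    simp only [mul_ite, mul_zero, Finset.sum_ite_eq', Finsupp.mem_support_iff]
    split_ifs with h
    · rfl
    · rw [not_not.1 h, zero_mul]
  -- the unified system
  set g : ℕ → ℝ → ℝ := fun n θ => if N % 2 = 0 then jQ α β n θ else jD α β n θ with hg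
  have hig : ∀ n m, Integrable (fun θ => g n θ * g m θ) μ := by
    intro n m
    simp only [hg]
    split_ifs
    · exact hiQ n m
    · exact hiD n m
  have hog : ∀ n m, ∫ θ, g n θ * g m θ ∂μ = if n = m then κ n ^ (N % 2) * q n else 0 := by
    intro n m
    rcases Nat.mod_two_eq_zero_or_one N with h | h
    · simp only [hg, h, if_true]; rw [hoQ]; simp
    · simp only [hg, h, one_ne_zero, if_false]; rw [hoD]; simp
  have hR : ∀ᵐ θ ∂μ, restRiesz α β N f θ =
      ∑ n ∈ a.support, (jLam α β (n + 1) ^ (-(N : ℝ) / 2) * (a n * q n) * κ n ^ (N / 2)) *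
        g n θ := by
    filter_upwards [ae_plus α β] with θ hθ
    rw [restRiesz]
    simp only [symPhi_odd, ← hμ, hcoef]
    rw [tsum_eq_sum (s := a.support) (by
      intro n hn
      rw [Finsupp.notMem_support_iff.1 hn]; simp)]
    refine Finset.sum_congr rfl fun n _ => ?_
    rw [deltaOdd_Q α β hα hβ n N hθ]
    simp only [hg, hκ]
    ring
  have hL : ∫⁻ θ, ENNReal.ofReal (restRiesz α β N f θ ^ 2) ∂μ =
      ∫⁻ θ, ENNReal.ofReal ((∑ n ∈ a.support,
        (jLam α β (n + 1) ^ (-(N : ℝ) / 2) * (a n * q n) * κ n ^ (N / 2)) * g n θ) ^ 2) ∂μ := by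
    refine lintegral_congr_ae ?_
    filter_upwards [hR] with θ h
    rw [h]
  rw [hL, sum_sq μ g _ a.support _ hig hog]
  have hF : ∫⁻ θ, ENNReal.ofReal (f θ ^ 2) ∂μ =
      ENNReal.ofReal (∑ n ∈ a.support, a n ^ 2 * q n) := by
    rw [hfe]; exact sum_sq μ (jQ α β) q a.support a hiQ hoQ
  rw [hF]
  refine ENNReal.ofReal_le_ofReal (Finset.sum_le_sum fun n _ => ?_)
  have hl : κ n ≤ jLam α β (n + 1) := jK_le α β n
  have hl0 : 0 < jLam α β (n + 1) := (hκ0 n).trans_le hl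
  have hpow : (jLam α β (n + 1) ^ (-(N : ℝ) / 2)) ^ 2 = (jLam α β (n + 1) ^ N)⁻¹ := by
    rw [← Real.rpow_mul_natCast hl0.le]
    have : -(N : ℝ) / 2 * ((2 : ℕ) : ℝ) = -(N : ℝ) := by push_cast; ring
    rw [this, Real.rpow_neg hl0.le, Real.rpow_natCast]
  have hk : (κ n ^ (N / 2)) ^ 2 * κ n ^ (N % 2) = κ n ^ N := by
    rw [← pow_mul, ← pow_add]; congr 1; omega
  have hratio : (jLam α β (n + 1) ^ N)⁻¹ * κ n ^ N ≤ 1 := by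
    rw [inv_mul_le_one₀ (by positivity)]
    exact pow_le_pow_left₀ (hκ0 n).le hl N
  have hqq : q n ^ 2 ≤ 1 := pow_le_one₀ (hq0 n) (hq1 n)
  calc _ = ((jLam α β (n + 1) ^ N)⁻¹ * κ n ^ N) * q n ^ 2 * (a n ^ 2 * q n) := by
        rw [← hpow, ← hk]; ring
    _ ≤ 1 * 1 * (a n ^ 2 * q n) := by
        have := hq0 n
        have := hκ0 n
        gcongr
    _ = a n ^ 2 * q n := by ring
end
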